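/- Let r ≥ 1 and N ≥ 0 be integers, and let the vertex set of Δ_N be partitioned into color classes C_0, …, C_d, each of cardinality at most 2r−1. For 0 ≤ i ≤ d let Σ_i denote the subcomplex of Δ_N consisting of all faces with at most one vertex in C_i, regarded as a subset of ℝ^{N+1} (the union of its faces). Let σ_1, …, σ_r be pairwise disjoint faces of Δ_N and for each j let x_j be a point in the relative interior of σ_j. If for every 0 ≤ i ≤ d the Euclidean distances dist(x_1, Σ_i) = ⋯ = dist(x_r, Σ_i) are all equal, then these distances are all 0 and every face σ_j is a rainbow face, i.e., σ_j ∈ Σ_0 ∩ ⋯ ∩ Σ_d. -/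

import Mathlib

/-!
The `r` faces are pairwise disjoint and a color class has fewer than `2 r` vertices, so some face
has at most one vertex in it. The point of that face lies in the corresponding subcomplex, whence
the common distance is `0`; since the subcomplex is closed, it contains all the points.
-/

open scoped BigOperators Classical

noncomputable section

/-- The standard `N`-dimensional simplex, realized in Euclidean space `ℝ^{N+1}`. -/
def stdSimp (N : ℕ) : Set (EuclideanSpace ℝ (Fin (N + 1))) :=
  {x | (∀ i, 0 ≤ x i) ∧ ∑ i, x i = 1}

/-- The support of a point of the simplex, as a finite set of vertices. -/
def suppF {n : ℕ} (x : EuclideanSpace ℝ (Fin n)) : Finset (Fin n) :=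
  Finset.univ.filter fun i => x i ≠ 0

/-- The geometric realization of the subcomplex of all faces of `Δ_N` having
at most one vertex in the color class `C`. -/
def sigmaSet (N : ℕ) (C : Finset (Fin (N + 1))) : Set (EuclideanSpace ℝ (Fin (N + 1))) :=
  {x ∈ stdSimp N | (suppF x ∩ C).card ≤ 1}

open scoped Topology

theorem isClosed_stdSimp (N : ℕ) : IsClosed (stdSimp N) :=
  (isClosed_stdSimplex ℝ (Fin (N + 1))).preimage (PiLp.continuous_ofLp 2 _)

theorem eventually_suppF_subset {n : ℕ} (x : EuclideanSpace ℝ (Fin n)) :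
    ∀ᶠ y in 𝓝 x, suppF x ⊆ suppF y := by
  have hne : ∀ᶠ y in 𝓝 x, ∀ i ∈ suppF x, y i ≠ 0 := by
    refine (Finset.eventually_all _).2 fun i hi => ?_
    have hcont : ContinuousAt (fun y : EuclideanSpace ℝ (Fin n) => y i) x := by fun_prop
    exact hcont.eventually_ne (Finset.mem_filter.1 hi).2
  filter_upwards [hne] with y hy i hi
  exact Finset.mem_filter.2 ⟨Finset.mem_univ i, hy i hi⟩

theorem isClosed_setOf_card_suppF_inter_le {n : ℕ} (C : Finset (Fin n)) (k : ℕ) :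
    IsClosed {x : EuclideanSpace ℝ (Fin n) | (suppF x ∩ C).card ≤ k} := by
  refine isOpen_compl_iff.1 (isOpen_iff_mem_nhds.2 fun x hx => ?_)
  filter_upwards [eventually_suppF_subset x] with y hxy hy
  exact hx ((Finset.card_le_card (Finset.inter_subset_inter_right hxy)).trans hy)

theorem isClosed_sigmaSet (N : ℕ) (C : Finset (Fin (N + 1))) : IsClosed (sigmaSet N C) :=
  (isClosed_stdSimp N).inter (isClosed_setOf_card_suppF_inter_le C 1)

theorem mem_of_infDist_eq_of_mem {X : Type*} [PseudoMetricSpace X] {s : Set X} (hs : IsClosed s)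
    {a b : X} (ha : a ∈ s) (hab : Metric.infDist b s = Metric.infDist a s) : b ∈ s :=
  (hs.mem_iff_infDist_zero ⟨a, ha⟩).2 (hab.trans (Metric.infDist_zero_of_mem ha))

theorem exists_card_inter_lt_of_card_lt_mul {ι α : Type*} [Fintype ι] [DecidableEq α]
    {σ : ι → Finset α} (hσ : Pairwise (Function.onFun Disjoint σ)) {C : Finset α} {k : ℕ}
    (hC : C.card < k * Fintype.card ι) : ∃ j, (σ j ∩ C).card < k := by
  have hdisj : ((Finset.univ : Finset ι) : Set ι).PairwiseDisjoint fun j => σ j ∩ C :=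
    fun j _ j' _ hjj' => (hσ hjj').mono Finset.inter_subset_left Finset.inter_subset_left
  have hsum : ∑ j, (σ j ∩ C).card < ∑ _j : ι, k :=
    calc ∑ j, (σ j ∩ C).card
        = (Finset.univ.biUnion fun j => σ j ∩ C).card :=
          (Finset.card_biUnion hdisj).symm
      _ ≤ C.card :=
          Finset.card_le_card (Finset.biUnion_subset.2 fun _ _ => Finset.inter_subset_right)
      _ < k * Fintype.card ι := hC
      _ = ∑ _j : ι, k := by
          rw [Finset.sum_const, Finset.card_univ, smul_eq_mul, mul_comm]
  obtain ⟨j, -, hj⟩ := Finset.exists_lt_of_sum_lt hsum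
  exact ⟨j, hj⟩

theorem equal_distances_to_color_subcomplexes_vanish_general
    {ι : Type*} [Fintype ι] {N : ℕ} {C : Finset (Fin (N + 1))}
    (hC : C.card < 2 * Fintype.card ι)
    {σ : ι → Finset (Fin (N + 1))} (hσ : Pairwise (Function.onFun Disjoint σ))
    {x : ι → EuclideanSpace ℝ (Fin (N + 1))}
    (hx : ∀ j, x j ∈ stdSimp N) (hsupp : ∀ j, suppF (x j) = σ j)
    (hdist : ∀ j j',
      Metric.infDist (x j) (sigmaSet N C) = Metric.infDist (x j') (sigmaSet N C)) (j : ι) :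
    Metric.infDist (x j) (sigmaSet N C) = 0 ∧ (σ j ∩ C).card ≤ 1 := by
  obtain ⟨k, hk⟩ := exists_card_inter_lt_of_card_lt_mul hσ hC
  have hxk : x k ∈ sigmaSet N C := ⟨hx k, by rw [hsupp k]; exact Nat.le_of_lt_succ hk⟩
  have hxj : x j ∈ sigmaSet N C :=
    mem_of_infDist_eq_of_mem (isClosed_sigmaSet N C) hxk (hdist j k)
  exact ⟨Metric.infDist_zero_of_mem hxj, hsupp j ▸ hxj.2⟩

/-- If points in the relative interiors of `r` pairwise disjoint faces of `Δ_N` are, for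
each color class `C_i` of cardinality at most `2r−1`, all at the same distance from the
subcomplex `Σ_i` of faces with at most one vertex in `C_i`, then all these distances vanish
and all the faces are rainbow faces. -/
theorem equal_distances_to_color_subcomplexes_vanish
    (r N d : ℕ) (hr : 1 ≤ r)
    (C : Fin (d + 1) → Finset (Fin (N + 1)))
    (hCdisj : ∀ i i' : Fin (d + 1), i ≠ i' → Disjoint (C i) (C i'))
    (hCcover : ∀ v : Fin (N + 1), ∃ i, v ∈ C i)
    (hCcard : ∀ i, (C i).card ≤ 2 * r - 1)
    (σ : Fin r → Finset (Fin (N + 1)))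
    (hne : ∀ j, (σ j).Nonempty)
    (hdisj : ∀ j j', j ≠ j' → Disjoint (σ j) (σ j'))
    (x : Fin r → EuclideanSpace ℝ (Fin (N + 1)))
    (hx : ∀ j, x j ∈ stdSimp N)
    (hsupp : ∀ j, suppF (x j) = σ j)
    (hdist : ∀ i : Fin (d + 1), ∀ j j' : Fin r,
      Metric.infDist (x j) (sigmaSet N (C i)) = Metric.infDist (x j') (sigmaSet N (C i))) :
    (∀ i : Fin (d + 1), ∀ j : Fin r, Metric.infDist (x j) (sigmaSet N (C i)) = 0) ∧
    (∀ j : Fin r, ∀ i : Fin (d + 1), (σ j ∩ C i).card ≤ 1) := by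
  have h i := equal_distances_to_color_subcomplexes_vanish_general
    (by grind [hCcard i, Fintype.card_fin]) hdisj hx hsupp (hdist i)
  exact ⟨fun i j => (h i j).1, fun j i => (h i j).2⟩
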